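/- arXiv:1308.2499 — 2 statements merged into one kernel-verified Lean document; each statement's English description precedes it below -/
import Mathlib

section
/- Let f ∈ L¹((ℝ/ℤ)³) be symmetric in all components, i.e. f(u_{σ(1)},u_{σ(2)},u_{σ(3)}) = f(u₁,u₂,u₃) for every permutation σ of {1,2,3}. Then ∭_{(ℝ/ℤ)³} f(u₁,u₂,u₃) du₁ du₂ du₃ = 6 ∫_{ℝ/ℤ} ∬_D f(u, u+v, u+w) dw dv du. -/
open MeasureTheory Set
open scoped ENNReal

noncomputable section

/-- The range of integration `D ⊆ (-1/2,0) × (0,1/2)` given by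
`w ≤ 1 + 2v` and `v ≥ -1 + 2w`. -/
def domainD : Set (ℝ × ℝ) :=
  {x | x.1 ∈ Set.Ioo (-(1/2) : ℝ) 0 ∧ x.2 ∈ Set.Ioo (0 : ℝ) (1/2) ∧
    x.2 ≤ 1 + 2 * x.1 ∧ -1 + 2 * x.2 ≤ x.1}


lemma per_add (g : ℝ → ℝ) (hg : Function.Periodic g 1) (u : ℝ) :
    ∫ b in Ico (0:ℝ) 1, g (u + b) = ∫ b in Ico (0:ℝ) 1, g b := by
  rw [integral_Ico_eq_integral_Ioc, integral_Ico_eq_integral_Ioc,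
    ← intervalIntegral.integral_of_le zero_le_one, ← intervalIntegral.integral_of_le zero_le_one,
    intervalIntegral.integral_comp_add_left]
  have := hg.intervalIntegral_add_eq u 0
  simpa using this

lemma per_sub (g : ℝ → ℝ) (hg : Function.Periodic g 1) (u : ℝ) :
    ∫ b in Ico (0:ℝ) 1, g (u - b) = ∫ b in Ico (0:ℝ) 1, g b := by
  rw [integral_Ico_eq_integral_Ioc, integral_Ico_eq_integral_Ioc,
    ← intervalIntegral.integral_of_le zero_le_one, ← intervalIntegral.integral_of_le zero_le_one,
    intervalIntegral.integral_comp_sub_left]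
  have := hg.intervalIntegral_add_eq (u-1) 0
  simpa using this

lemma line_ne (α c : ℝ) (β : ℝ) (hβ : β ≠ 0) :
    ∀ᵐ x : ℝ × ℝ, α * x.1 + β * x.2 ≠ c := by
  have hm : MeasurableSet {x : ℝ × ℝ | α * x.1 + β * x.2 ≠ c} := by
    apply IsOpen.measurableSet
    exact isOpen_ne_fun (by fun_prop) (by fun_prop)
  have := (Measure.ae_prod_mem_iff_ae_ae_mem (μ := (volume : Measure ℝ))
    (ν := (volume : Measure ℝ)) hm).2 (by
      refine Filter.Eventually.of_forall fun a => ?_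
      have : ∀ᵐ b : ℝ, b ≠ (c - α * a) / β := by
        simp [ae_iff]
      filter_upwards [this] with b hb
      contrapose! hb
      field_simp
      linarith)
  exact this

lemma fst_ne (c : ℝ) : ∀ᵐ x : ℝ × ℝ, x.1 ≠ c := by
  have : ∀ᵐ b : ℝ, b ≠ c := by simp [ae_iff]
  exact (Measure.quasiMeasurePreserving_fst (μ := (volume : Measure ℝ))
    (ν := (volume : Measure ℝ))).ae this

/-- the gap domain -/
def gapD : Set (ℝ × ℝ) :=
  {x | 0 < x.1 ∧ 0 < x.2 ∧ x.2 ≤ 1 - 2 * x.1 ∧ x.1 ≤ 1 - 2 * x.2}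

/-- rotation -/
def rho (x : ℝ × ℝ) : ℝ × ℝ := (x.2, 1 - x.1 - x.2)

/-- reflection -/
def refl' (x : ℝ × ℝ) : ℝ × ℝ := (1 - x.2, 1 - x.1)

lemma mp_swap : MeasurePreserving (Prod.swap : ℝ × ℝ → ℝ × ℝ) volume volume :=
  Measure.measurePreserving_swap

lemma mp_rho : MeasurePreserving rho volume volume := by
  have h : MeasurePreserving (fun x : ℝ × ℝ => (x.1, 1 - x.2 - x.1)) volume volume := by
    refine (MeasurePreserving.id (volume : Measure ℝ)).skew_product
      (g := fun a b => 1 - b - a) (by fun_prop) ?_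
    refine Filter.Eventually.of_forall fun a => ?_
    have := (Measure.measurePreserving_sub_left (volume : Measure ℝ) (1 - a)).map_eq
    have e : (fun b : ℝ => 1 - b - a) = fun t => 1 - a - t := by ext b; ring
    simp only [e]
    exact this
  exact h.comp mp_swap

lemma mp_refl : MeasurePreserving refl' volume volume := by
  have h := ((Measure.measurePreserving_sub_left (volume : Measure ℝ) 1).prod
    (Measure.measurePreserving_sub_left (volume : Measure ℝ) 1))
  exact h.comp mp_swap

lemma gapD_meas : MeasurableSet gapD := by
  have m1 : MeasurableSet {x : ℝ × ℝ | 0 < x.1} := measurableSet_lt (by fun_prop) (by fun_prop)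
  have m2 : MeasurableSet {x : ℝ × ℝ | 0 < x.2} := measurableSet_lt (by fun_prop) (by fun_prop)
  have m3 : MeasurableSet {x : ℝ × ℝ | x.2 ≤ 1 - 2 * x.1} :=
    measurableSet_le (by fun_prop) (by fun_prop)
  have m4 : MeasurableSet {x : ℝ × ℝ | x.1 ≤ 1 - 2 * x.2} :=
    measurableSet_le (by fun_prop) (by fun_prop)
  exact m1.inter (m2.inter (m3.inter m4))

lemma gapD_sub : gapD ⊆ Ico (0:ℝ) 1 ×ˢ Ico (0:ℝ) 1 := by
  rintro ⟨a, b⟩ ⟨h1, h2, h3, h4⟩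
  simp only at h1 h2 h3 h4
  refine ⟨⟨?_, ?_⟩, ⟨?_, ?_⟩⟩ <;> simp only <;> linarith

open Classical in
lemma ite_core (h : ℝ) (P Q0 Q1 Q2 : Prop) (e : P ↔ Q0 ∨ Q1 ∨ Q2)
    (d01 : Q0 → ¬ Q1) (d02 : Q0 → ¬ Q2) (d12 : Q1 → ¬ Q2) :
    (if P then h else 0) = (if Q0 then h else 0) + (if Q1 then h else 0) + (if Q2 then h else 0) := by
  by_cases q0 : Q0 <;> by_cases q1 : Q1 <;> by_cases q2 : Q2 <;> simp_all

lemma pointwise (a b h : ℝ) (h1 : a ≠ 0) (h2 : b ≠ 0) (h3 : a ≠ b) (h4 : a + b ≠ 1)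
    (h5 : 2 * a + b ≠ 1) (h6 : a + 2 * b ≠ 1) (h7 : 2 * a + b ≠ 2) (h8 : a + 2 * b ≠ 2) :
    (Ico (0:ℝ) 1 ×ˢ Ico (0:ℝ) 1).indicator (fun _ => h) (a, b) =
      gapD.indicator (fun _ => h) (a, b) + gapD.indicator (fun _ => h) (rho (a, b))
      + gapD.indicator (fun _ => h) (rho (rho (a, b)))
      + (gapD.indicator (fun _ => h) (refl' (a, b)) + gapD.indicator (fun _ => h) (rho (refl' (a, b)))
      + gapD.indicator (fun _ => h) (rho (rho (refl' (a, b))))) := by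
  have qq : (a, b) ∈ Ico (0:ℝ) 1 ×ˢ Ico (0:ℝ) 1 ↔ 0 ≤ a ∧ a < 1 ∧ 0 ≤ b ∧ b < 1 := by
    simp only [mem_prod, mem_Ico]; tauto
  have q0 : (a, b) ∈ gapD ↔ 0 < a ∧ 0 < b ∧ 2 * a + b ≤ 1 ∧ a + 2 * b ≤ 1 := by
    simp only [gapD, rho, refl', mem_ofPred_eq]
    constructor <;> rintro ⟨_, _, _, _⟩ <;> refine ⟨?_, ?_, ?_, ?_⟩ <;> linarith
  have q1 : rho (a, b) ∈ gapD ↔ 0 < b ∧ a + b < 1 ∧ b ≤ a ∧ 1 ≤ 2 * a + b := by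
    simp only [gapD, rho, refl', mem_ofPred_eq]
    constructor <;> rintro ⟨_, _, _, _⟩ <;> refine ⟨?_, ?_, ?_, ?_⟩ <;> linarith
  have q2 : rho (rho (a, b)) ∈ gapD ↔ a + b < 1 ∧ 0 < a ∧ a ≤ b ∧ 1 ≤ a + 2 * b := by
    simp only [gapD, rho, refl', mem_ofPred_eq]
    constructor <;> rintro ⟨_, _, _, _⟩ <;> refine ⟨?_, ?_, ?_, ?_⟩ <;> linarith
  have q3 : refl' (a, b) ∈ gapD ↔ b < 1 ∧ a < 1 ∧ 2 ≤ a + 2 * b ∧ 2 ≤ 2 * a + b := by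
    simp only [gapD, rho, refl', mem_ofPred_eq]
    constructor <;> rintro ⟨_, _, _, _⟩ <;> refine ⟨?_, ?_, ?_, ?_⟩ <;> linarith
  have q4 : rho (refl' (a, b)) ∈ gapD ↔ a < 1 ∧ 1 < a + b ∧ b ≤ a ∧ a + 2 * b ≤ 2 := by
    simp only [gapD, rho, refl', mem_ofPred_eq]
    constructor <;> rintro ⟨_, _, _, _⟩ <;> refine ⟨?_, ?_, ?_, ?_⟩ <;> linarith
  have q5 : rho (rho (refl' (a, b))) ∈ gapD ↔ 1 < a + b ∧ b < 1 ∧ a ≤ b ∧ 2 * a + b ≤ 2 := by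
    simp only [gapD, rho, refl', mem_ofPred_eq]
    constructor <;> rintro ⟨_, _, _, _⟩ <;> refine ⟨?_, ?_, ?_, ?_⟩ <;> linarith
  simp only [indicator]
  rcases lt_or_gt_of_ne h4 with g4 | g4
  · have n3 : refl' (a, b) ∉ gapD := by rw [q3]; rintro ⟨_, _, _, _⟩; linarith
    have n4 : rho (refl' (a, b)) ∉ gapD := by rw [q4]; rintro ⟨_, _, _, _⟩; linarith
    have n5 : rho (rho (refl' (a, b))) ∉ gapD := by rw [q5]; rintro ⟨_, _, _, _⟩; linarith
    rw [if_neg n3, if_neg n4, if_neg n5]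
    have := ite_core h ((a, b) ∈ Ico (0:ℝ) 1 ×ˢ Ico (0:ℝ) 1) ((a, b) ∈ gapD)
      (rho (a, b) ∈ gapD) (rho (rho (a, b)) ∈ gapD) (by
        rw [qq, q0, q1, q2]
        constructor
        · rintro ⟨p1, p2, p3, p4⟩
          have p1' := lt_of_le_of_ne p1 h1.symm
          have p3' := lt_of_le_of_ne p3 h2.symm
          rcases le_total a b with g3 | g3 <;> rcases lt_or_gt_of_ne h5 with g5 | g5 <;>
            rcases lt_or_gt_of_ne h6 with g6 | g6 <;>
          first
          | exact Or.inl ⟨by linarith, by linarith, by linarith, by linarith⟩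
          | exact Or.inr (Or.inl ⟨by linarith, by linarith, by linarith, by linarith⟩)
          | exact Or.inr (Or.inr ⟨by linarith, by linarith, by linarith, by linarith⟩)
        · rintro (⟨_, _, _, _⟩ | ⟨_, _, _, _⟩ | ⟨_, _, _, _⟩) <;>
            refine ⟨?_, ?_, ?_, ?_⟩ <;> linarith)
      (by rw [q0, q1]; rintro ⟨_, _, _, _⟩ ⟨_, _, _, _⟩; contrapose! h5; linarith)
      (by rw [q0, q2]; rintro ⟨_, _, _, _⟩ ⟨_, _, _, _⟩; contrapose! h6; linarith)
      (by rw [q1, q2]; rintro ⟨_, _, _, _⟩ ⟨_, _, _, _⟩; contrapose! h3; linarith)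
    simp only [add_zero, zero_add]
    convert this
  · have n0 : (a, b) ∉ gapD := by rw [q0]; rintro ⟨_, _, _, _⟩; linarith
    have n1 : rho (a, b) ∉ gapD := by rw [q1]; rintro ⟨_, _, _, _⟩; linarith
    have n2 : rho (rho (a, b)) ∉ gapD := by rw [q2]; rintro ⟨_, _, _, _⟩; linarith
    rw [if_neg n0, if_neg n1, if_neg n2]
    have := ite_core h ((a, b) ∈ Ico (0:ℝ) 1 ×ˢ Ico (0:ℝ) 1) (refl' (a, b) ∈ gapD)
      (rho (refl' (a, b)) ∈ gapD) (rho (rho (refl' (a, b))) ∈ gapD) (by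
        rw [qq, q3, q4, q5]
        constructor
        · rintro ⟨p1, p2, p3, p4⟩
          have p1' := lt_of_le_of_ne p1 h1.symm
          have p3' := lt_of_le_of_ne p3 h2.symm
          rcases le_total a b with g3 | g3 <;> rcases lt_or_gt_of_ne h8 with g5 | g5 <;>
            rcases lt_or_gt_of_ne h7 with g6 | g6 <;>
          first
          | exact Or.inl ⟨by linarith, by linarith, by linarith, by linarith⟩
          | exact Or.inr (Or.inl ⟨by linarith, by linarith, by linarith, by linarith⟩)
          | exact Or.inr (Or.inr ⟨by linarith, by linarith, by linarith, by linarith⟩)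
        · rintro (⟨_, _, _, _⟩ | ⟨_, _, _, _⟩ | ⟨_, _, _, _⟩) <;>
            refine ⟨?_, ?_, ?_, ?_⟩ <;> linarith)
      (by rw [q3, q4]; rintro ⟨_, _, _, _⟩ ⟨_, _, _, _⟩; contrapose! h8; linarith)
      (by rw [q3, q5]; rintro ⟨_, _, _, _⟩ ⟨_, _, _, _⟩; contrapose! h7; linarith)
      (by rw [q4, q5]; rintro ⟨_, _, _, _⟩ ⟨_, _, _, _⟩; contrapose! h3; linarith)
    simp only [add_zero, zero_add]
    convert this

lemma two_dim (H : ℝ × ℝ → ℝ) (hρ : ∀ x, H (rho x) = H x) (hr : ∀ x, H (refl' x) = H x)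
    (hi : IntegrableOn H (Ico (0:ℝ) 1 ×ˢ Ico (0:ℝ) 1)) :
    ∫ x in Ico (0:ℝ) 1 ×ˢ Ico (0:ℝ) 1, H x = 6 * ∫ x in gapD, H x := by
  have hD : Integrable (gapD.indicator H) := (hi.mono_set gapD_sub).integrable_indicator gapD_meas
  rw [← integral_indicator (measurableSet_Ico.prod measurableSet_Ico),
    ← integral_indicator gapD_meas]
  have key : ∀ e : ℝ × ℝ → ℝ × ℝ, MeasurePreserving e volume volume →
      Integrable (fun x => gapD.indicator H (e x)) ∧
      ∫ x, gapD.indicator H (e x) = ∫ x, gapD.indicator H x := by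
    intro e he
    refine ⟨(he.integrable_comp hD.aestronglyMeasurable).2 hD, ?_⟩
    have := integral_map (μ := volume) (φ := e) he.measurable.aemeasurable
      (f := gapD.indicator H) (by rw [he.map_eq]; exact hD.aestronglyMeasurable)
    rw [← this, he.map_eq]
  have k0 := key id (MeasurePreserving.id _)
  have k1 := key _ mp_rho
  have k2 := key _ (mp_rho.comp mp_rho)
  have k3 := key _ mp_refl
  have k4 := key _ (mp_rho.comp mp_refl)
  have k5 := key _ (mp_rho.comp (mp_rho.comp mp_refl))
  simp only [Function.comp, id] at k0 k1 k2 k3 k4 k5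
  have hae : (Ico (0:ℝ) 1 ×ˢ Ico (0:ℝ) 1).indicator H =ᵐ[volume] fun x =>
      gapD.indicator H x + gapD.indicator H (rho x)
      + gapD.indicator H (rho (rho x))
      + (gapD.indicator H (refl' x) + gapD.indicator H (rho (refl' x))
      + gapD.indicator H (rho (rho (refl' x)))) := by
    filter_upwards [fst_ne 0, line_ne 0 0 1 one_ne_zero, line_ne 1 0 (-1) (by norm_num),
      line_ne 1 1 1 one_ne_zero, line_ne 2 1 1 one_ne_zero, line_ne 1 1 2 two_ne_zero,
      line_ne 2 2 1 one_ne_zero, line_ne 1 2 2 two_ne_zero] with x h1 h2 h3 h4 h5 h6 h7 h8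
    obtain ⟨a, b⟩ := x
    simp only at h1 h2 h3 h4 h5 h6 h7 h8
    have := pointwise a b (H (a, b)) h1 (by contrapose! h2; linarith) (by contrapose! h3; linarith)
      (by contrapose! h4; linarith) (by contrapose! h5; linarith) (by contrapose! h6; linarith)
      (by contrapose! h7; linarith) (by contrapose! h8; linarith)
    simp only [indicator, hρ, hr] at this ⊢
    convert this
  have A1 : Integrable (fun x => gapD.indicator H x + gapD.indicator H (rho x)) := k0.1.add k1.1
  have A2 : Integrable (fun x => gapD.indicator H x + gapD.indicator H (rho x)
    + gapD.indicator H (rho (rho x))) := A1.add k2.1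
  have A3 : Integrable (fun x => gapD.indicator H (refl' x) + gapD.indicator H (rho (refl' x))) :=
    k3.1.add k4.1
  have A4 : Integrable (fun x => gapD.indicator H (refl' x) + gapD.indicator H (rho (refl' x))
    + gapD.indicator H (rho (rho (refl' x)))) := A3.add k5.1
  rw [integral_congr_ae hae, integral_add A2 A4,
    integral_add A1 k2.1, integral_add k0.1 k1.1,
    integral_add A3 k5.1, integral_add k3.1 k4.1, k1.2, k2.2, k3.2, k4.2, k5.2]
  ring

/-- shear -/
def shear (x : ℝ × ℝ × ℝ) : ℝ × ℝ × ℝ := (x.1, x.1 - x.2.1, x.1 + x.2.2)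

lemma mp_shear : MeasurePreserving shear volume volume := by
  refine (MeasurePreserving.id (volume : Measure ℝ)).skew_product
    (g := fun u (p : ℝ × ℝ) => (u - p.1, u + p.2)) (by fun_prop) ?_
  refine Filter.Eventually.of_forall fun u => ?_
  exact ((Measure.measurePreserving_sub_left (volume : Measure ℝ) u).prod
    (measurePreserving_add_left (volume : Measure ℝ) u)).map_eq

lemma me_shear : MeasurableEmbedding shear := by
  apply Continuous.measurableEmbedding
  · unfold shear; fun_prop
  · rintro ⟨a, b, c⟩ ⟨a', b', c'⟩ h
    simp only [shear, Prod.mk.injEq] at h ⊢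
    refine ⟨?_, ?_, ?_⟩ <;> linarith

lemma shear_int (f : ℝ → ℝ → ℝ → ℝ)
    (hper₂ : ∀ u₁ u₃, Function.Periodic (fun u₂ => f u₁ u₂ u₃) 1)
    (hper₃ : ∀ u₁ u₂, Function.Periodic (fun u₃ => f u₁ u₂ u₃) 1)
    (hint : IntegrableOn (fun x : ℝ × ℝ × ℝ => f x.1 x.2.1 x.2.2)
      (Set.Ico (0:ℝ) 1 ×ˢ Set.Ico (0:ℝ) 1 ×ˢ Set.Ico (0:ℝ) 1)) :
    IntegrableOn (fun x : ℝ × ℝ × ℝ => f x.1 (x.1 - x.2.1) (x.1 + x.2.2))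
      (Set.Ico (0:ℝ) 1 ×ˢ Set.Ico (0:ℝ) 1 ×ˢ Set.Ico (0:ℝ) 1) := by
  have htr : ∀ j k : ℤ, IntegrableOn (fun x : ℝ × ℝ × ℝ => f x.1 x.2.1 x.2.2)
      ((fun x : ℝ × ℝ × ℝ => x + (0, (j:ℝ), (k:ℝ))) ⁻¹'
        (Set.Ico (0:ℝ) 1 ×ˢ Set.Ico (0:ℝ) 1 ×ˢ Set.Ico (0:ℝ) 1)) := by
    intro j k
    have hm : MeasurePreserving (fun x : ℝ × ℝ × ℝ => x + (0, (j:ℝ), (k:ℝ))) volume volume :=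
      (measurePreserving_add_right (volume : Measure ℝ) 0).prod
        ((measurePreserving_add_right (volume : Measure ℝ) (j:ℝ)).prod
          (measurePreserving_add_right (volume : Measure ℝ) (k:ℝ)))
    have := (hm.integrableOn_comp_preimage (measurableEmbedding_addRight _)).2 hint
    refine this.congr_fun_ae (Filter.Eventually.of_forall ?_)
    rintro ⟨a, b, c⟩
    simp only [Function.comp, Prod.mk_add_mk, add_zero]
    have e1 := (hper₂ a c).int_mul j b
    have e2 := (hper₃ a (b + j)).int_mul k c
    simp only [mul_one] at e1 e2
    rw [e2, e1]
  have hU : IntegrableOn (fun x : ℝ × ℝ × ℝ => f x.1 x.2.1 x.2.2)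
      (⋃ p ∈ (Finset.Icc (-1:ℤ) 1 ×ˢ Finset.Icc (-1:ℤ) 1),
      ((fun x : ℝ × ℝ × ℝ => x + (0, (p.1:ℝ), (p.2:ℝ))) ⁻¹'
        (Set.Ico (0:ℝ) 1 ×ˢ Set.Ico (0:ℝ) 1 ×ˢ Set.Ico (0:ℝ) 1))) := by
    rw [integrableOn_finset_iUnion]
    intro p _
    exact htr p.1 p.2
  have h2 := (mp_shear.integrableOn_comp_preimage me_shear).2 hU
  refine h2.mono_set ?_
  rintro ⟨u, a, b⟩ ⟨⟨hu0, hu1⟩, ⟨ha0, ha1⟩, ⟨hb0, hb1⟩⟩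
  simp only at hu0 hu1 ha0 ha1 hb0 hb1
  have aux : ∀ t : ℝ, -1 < t → t < 2 → ∃ j : ℤ, j ∈ Finset.Icc (-1:ℤ) 1 ∧ t + j ∈ Ico (0:ℝ) 1 := by
    intro t h1 h2
    refine ⟨-⌊t⌋, ?_, ?_, ?_⟩
    · have e1 : -1 ≤ ⌊t⌋ := Int.le_floor.2 (by push_cast; linarith)
      have e2 : ⌊t⌋ < 2 := Int.floor_lt.2 (by push_cast; linarith)
      rw [Finset.mem_Icc]; omega
    · have := Int.floor_le t; push_cast; linarith
    · have := Int.lt_floor_add_one t; push_cast; linarith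
  obtain ⟨j, hj, hj'⟩ := aux (u - a) (by linarith) (by linarith)
  obtain ⟨k, hk, hk'⟩ := aux (u + b) (by linarith) (by linarith)
  simp only [mem_preimage, mem_iUnion, shear]
  refine ⟨(j, k), Finset.mem_product.2 ⟨hj, hk⟩, ?_⟩
  exact ⟨by simpa using ⟨hu0, hu1⟩, hj', hk'⟩

lemma slice_eq (g : ℝ → ℝ → ℝ) (u : ℝ)
    (h2 : ∀ c, Function.Periodic (fun b => g b c) 1)
    (h3 : ∀ b, Function.Periodic (fun c => g b c) 1)
    (i1 : IntegrableOn (fun x : ℝ × ℝ => g x.1 x.2) (Ico (0:ℝ) 1 ×ˢ Ico (0:ℝ) 1))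
    (i2 : IntegrableOn (fun x : ℝ × ℝ => g (u - x.1) (u + x.2)) (Ico (0:ℝ) 1 ×ˢ Ico (0:ℝ) 1)) :
    ∫ x in Ico (0:ℝ) 1 ×ˢ Ico (0:ℝ) 1, g x.1 x.2 =
    ∫ x in Ico (0:ℝ) 1 ×ˢ Ico (0:ℝ) 1, g (u - x.1) (u + x.2) := by
  have e1 := setIntegral_prod (μ := (volume : Measure ℝ)) (ν := (volume : Measure ℝ)) _ i1
  have e2 := setIntegral_prod (μ := (volume : Measure ℝ)) (ν := (volume : Measure ℝ)) _ i2
  refine e1.trans (Eq.trans ?_ e2.symm)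
  simp only
  have : ∀ a, ∫ b in Ico (0:ℝ) 1, g (u - a) (u + b) = ∫ b in Ico (0:ℝ) 1, g (u - a) b :=
    fun a => per_add _ (h3 _) u
  simp only [this]
  refine (per_sub (fun a => ∫ b in Ico (0:ℝ) 1, g a b) ?_ u).symm
  intro a
  refine integral_congr_ae (Filter.Eventually.of_forall fun b => h2 b a)

/-- **Domain decomposition.** If `f ∈ L¹((ℝ/ℤ)³)` (modelled by a function that is
`1`-periodic in each variable and integrable on the fundamental domain `[0,1)³`)
is symmetric in all components, then
`∭_{(ℝ/ℤ)³} f(u₁,u₂,u₃) = 6 ∫_{ℝ/ℤ} ∬_D f(u, u+v, u+w)`. -/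
theorem domain_decomposition (f : ℝ → ℝ → ℝ → ℝ)
    (hper₁ : ∀ u₂ u₃, Function.Periodic (fun u₁ => f u₁ u₂ u₃) 1)
    (hper₂ : ∀ u₁ u₃, Function.Periodic (fun u₂ => f u₁ u₂ u₃) 1)
    (hper₃ : ∀ u₁ u₂, Function.Periodic (fun u₃ => f u₁ u₂ u₃) 1)
    (hsymm₁₂ : ∀ u₁ u₂ u₃, f u₁ u₂ u₃ = f u₂ u₁ u₃)
    (hsymm₂₃ : ∀ u₁ u₂ u₃, f u₁ u₂ u₃ = f u₁ u₃ u₂)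
    (hint : IntegrableOn (fun x : ℝ × ℝ × ℝ => f x.1 x.2.1 x.2.2)
      (Set.Ico (0:ℝ) 1 ×ˢ Set.Ico (0:ℝ) 1 ×ˢ Set.Ico (0:ℝ) 1)) :
    ∫ x in Set.Ico (0:ℝ) 1 ×ˢ Set.Ico (0:ℝ) 1 ×ˢ Set.Ico (0:ℝ) 1,
        f x.1 x.2.1 x.2.2 =
      6 * ∫ u in Set.Ico (0:ℝ) 1, ∫ x in domainD, f u (u + x.1) (u + x.2) := by
  have hG := shear_int f hper₂ hper₃ hint
  set Q : Set (ℝ × ℝ) := Ico (0:ℝ) 1 ×ˢ Ico (0:ℝ) 1 with hQ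
  set H : ℝ × ℝ → ℝ := fun x => ∫ u in Ico (0:ℝ) 1, f u (u - x.1) (u + x.2) with hH
  have hint' : Integrable (fun x : ℝ × ℝ × ℝ => f x.1 x.2.1 x.2.2)
      (((volume : Measure ℝ).restrict (Ico (0:ℝ) 1)).prod
        ((volume : Measure (ℝ × ℝ)).restrict Q)) := by
    rw [Measure.prod_restrict]; exact hint
  have hG' : Integrable (fun x : ℝ × ℝ × ℝ => f x.1 (x.1 - x.2.1) (x.1 + x.2.2))
      (((volume : Measure ℝ).restrict (Ico (0:ℝ) 1)).prod
        ((volume : Measure (ℝ × ℝ)).restrict Q)) := by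
    rw [Measure.prod_restrict]; exact hG
  have hGD : Integrable (fun x : ℝ × ℝ × ℝ => f x.1 (x.1 - x.2.1) (x.1 + x.2.2))
      (((volume : Measure ℝ).restrict (Ico (0:ℝ) 1)).prod
        ((volume : Measure (ℝ × ℝ)).restrict gapD)) := by
    rw [Measure.prod_restrict]
    exact hG.mono_set (prod_mono le_rfl gapD_sub)
  have hHi : IntegrableOn H Q := hG'.integral_prod_right
  -- left-hand side
  have L : ∫ x in Ico (0:ℝ) 1 ×ˢ Q, f x.1 x.2.1 x.2.2 = ∫ x in Q, H x := by
    have e1 := setIntegral_prod (μ := (volume : Measure ℝ)) (ν := (volume : Measure (ℝ × ℝ))) _ hint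
    refine e1.trans ?_
    rw [hH, ← integral_integral_swap (f := fun u (x : ℝ × ℝ) => f u (u - x.1) (u + x.2)) hG']
    refine integral_congr_ae ?_
    filter_upwards [hint'.prod_right_ae, hG'.prod_right_ae] with u i1 i2
    exact slice_eq (f u) u (fun c => hper₂ u c) (fun b => hper₃ u b) i1 i2
  have R : ∫ u in Ico (0:ℝ) 1, ∫ x in domainD, f u (u + x.1) (u + x.2) = ∫ x in gapD, H x := by
    rw [hH, ← integral_integral_swap (f := fun u (x : ℝ × ℝ) => f u (u - x.1) (u + x.2)) hGD]
    refine integral_congr_ae (Filter.Eventually.of_forall fun u => ?_)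
    have hm : MeasurePreserving (fun x : ℝ × ℝ => (-x.1, x.2)) volume volume :=
      (Measure.measurePreserving_neg (volume : Measure ℝ)).prod (MeasurePreserving.id _)
    have he : MeasurableEmbedding (fun x : ℝ × ℝ => (-x.1, x.2)) := by
      apply Continuous.measurableEmbedding
      · fun_prop
      · rintro ⟨a, b⟩ ⟨a', b'⟩ h
        simpa using h
    have := hm.setIntegral_preimage_emb he (fun x => f u (u + x.1) (u + x.2)) domainD
    simp only at this ⊢
    rw [← this]
    have hs : (fun x : ℝ × ℝ => (-x.1, x.2)) ⁻¹' domainD = gapD := by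
      ext ⟨a, b⟩
      simp only [mem_preimage, domainD, gapD, mem_ofPred_eq, mem_Ioo]
      constructor
      · rintro ⟨⟨_, _⟩, ⟨_, _⟩, _, _⟩
        refine ⟨?_, ?_, ?_, ?_⟩ <;> linarith
      · rintro ⟨_, _, _, _⟩
        refine ⟨⟨?_, ?_⟩, ⟨?_, ?_⟩, ?_, ?_⟩ <;> linarith
    rw [hs]
    simp only [← sub_eq_add_neg]
  rw [L, R]
  refine two_dim H ?_ ?_ hHi
  · rintro ⟨a, b⟩
    simp only [hH, rho]
    rw [← per_add (fun u => f u (u - b) (u + (1 - a - b))) ?_ b]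
    · refine integral_congr_ae (Filter.Eventually.of_forall fun u => ?_)
      simp only
      have e := hper₃ (b + u) u (u - a)
      simp only at e
      rw [show b + u - b = u by ring, show b + u + (1 - a - b) = u - a + 1 by ring, e,
        hsymm₁₂, hsymm₂₃, add_comm b u]
    · intro u
      have e1 := hper₁ (u + 1 - b) (u + 1 + (1 - a - b)) u
      have e2 := hper₂ u (u + 1 + (1 - a - b)) (u - b)
      have e3 := hper₃ u (u - b) (u + (1 - a - b))
      simp only at e1 e2 e3 ⊢
      rw [e1, show u + 1 - b = u - b + 1 by ring, e2,
        show u + 1 + (1 - a - b) = u + (1 - a - b) + 1 by ring, e3]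
  · rintro ⟨a, b⟩
    simp only [hH, refl']
    refine integral_congr_ae (Filter.Eventually.of_forall fun u => ?_)
    have e2 := hper₂ u (u + (1 - a)) (u - (1 - b))
    have e3 := hper₃ u (u + b) (u - a)
    simp only at e2 e3 ⊢
    rw [← e2, show u - (1 - b) + 1 = u + b by ring, show u + (1 - a) = u - a + 1 by ring, e3,
      hsymm₂₃]
end
end

section
/- Let p, q > 0 with p < (2/3)q + 1. Then there is a constant C = C(p,q) < ∞ such that for every δ ∈ (0,1]: ∭_{[−1,1]³} (δ² + u²)^{q/2} / (|v−w|^{p−q} (δ² + u² + v²)^{p/2} (δ² + u² + w²)^{p/2}) du dv dw ≤ C. (This triple integral is, up to a constant factor, the mutual generalized integral Menger curvature of the two perpendicular segments γ₁(u) = (u,0,0) and γ₂(u) = (0,u,δ), u ∈ [−1,1], showing that E_{p,q} does not penalize self-intersections for p < (2/3)q + 1.) -/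
open MeasureTheory Set
open scoped ENNReal

noncomputable section

lemma nr_pointwise (p q α : ℝ) (hp0 : 0 < p) (hq0 : 0 < q) (hα0 : 0 < α)
    (hr : p - q ≤ α) (hα : 3 * p - 2 * q ≤ 3 * α) (δ u v w : ℝ) (hδ0 : 0 < δ) (hδ : δ ≤ 1)
    (hu1 : |u| ≤ 1) (hv1 : |v| ≤ 1) (hu : u ≠ 0) (hw : w ≠ 0) (ht : v - w ≠ 0) (hwv : |w| ≤ |v|) :
    (δ^2 + u^2) ^ (q/2) / (|v - w| ^ (p - q) * (δ^2 + u^2 + v^2) ^ (p/2) *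
              (δ^2 + u^2 + w^2) ^ (p/2)) ≤
    (2 ^ (α - (p - q)) * 3 ^ ((3 * α - (3 * p - 2 * q)) / 2)) *
      (|u| ^ (-α) * |v - w| ^ (-α) * |w| ^ (-α)) := by
  have hu' : 0 < |u| := abs_pos.2 hu
  have hw' : 0 < |w| := abs_pos.2 hw
  have ht' : 0 < |v - w| := abs_pos.2 ht
  have hu2 : u^2 ≤ 1 := by rw [← sq_abs]; nlinarith
  have hv2 : v^2 ≤ 1 := by rw [← sq_abs]; nlinarith [abs_nonneg v]
  have hwv2 : w^2 ≤ v^2 := sq_le_sq.2 hwv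
  have hu0 : 0 < u^2 := by positivity
  have hw0 : 0 < w^2 := by positivity
  have hd0 : 0 < δ^2 := by positivity
  have hd1 : δ^2 ≤ 1 := by nlinarith
  have htv : |v - w| ≤ 2 * |v| := by
    have := abs_sub v w
    linarith
  generalize hs : δ^2 + u^2 = s
  generalize hA : s + v^2 = A
  generalize hB : s + w^2 = B
  generalize hT : |v - w| = t at *
  have s0 : 0 < s := by linarith
  have B0 : 0 < B := by linarith
  have A0 : 0 < A := by linarith
  have sB : s ≤ B := by linarith
  have BA : B ≤ A := by linarith
  have A3 : A ≤ 3 := by linarith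
  have hsq : ∀ x X : ℝ, 0 < x → x ^ 2 ≤ X → X ^ (-α/2) ≤ x ^ (-α) := by
    intro x X hx hX
    calc X ^ (-α/2) ≤ (x^2) ^ (-α/2) :=
          Real.rpow_le_rpow_of_nonpos (by positivity) hX (by linarith)
      _ = x ^ (-α) := by
          rw [← Real.rpow_natCast, ← Real.rpow_mul hx.le]; congr 1; push_cast; ring
  have h1 : A ^ (-α/2) ≤ |u| ^ (-α) := hsq _ _ hu' (by rw [sq_abs]; nlinarith)
  have h2 : B ^ (-α/2) ≤ |w| ^ (-α) := hsq _ _ hw' (by rw [sq_abs]; nlinarith)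
  have h3 : t ^ (α - (p - q)) ≤ 2 ^ (α - (p - q)) * A ^ ((α - (p - q))/2) := by
    have e : A ^ ((α - (p - q))/2) = (Real.sqrt A) ^ (α - (p - q)) := by
      rw [Real.sqrt_eq_rpow, ← Real.rpow_mul A0.le]; congr 1; ring
    rw [e, ← Real.mul_rpow (by norm_num) (Real.sqrt_nonneg _)]
    apply Real.rpow_le_rpow ht'.le _ (by linarith)
    have : |v| ≤ Real.sqrt A := Real.abs_le_sqrt (by linarith)
    linarith
  have h4 : s ^ (q/2) ≤ B ^ (q/2) := Real.rpow_le_rpow s0.le sB (by linarith)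
  have h5 : B ^ ((α - (p - q))/2) ≤ A ^ ((α - (p - q))/2) :=
    Real.rpow_le_rpow B0.le BA (by linarith)
  have h6 : A ^ ((3 * α - (3 * p - 2 * q)) / 2) ≤ 3 ^ ((3 * α - (3 * p - 2 * q)) / 2) :=
    Real.rpow_le_rpow A0.le A3 (by linarith)
  have e0 : s ^ (q/2) / (t ^ (p - q) * A ^ (p/2) * B ^ (p/2)) =
      s ^ (q/2) * t ^ (-(p-q)) * A ^ (-(p/2)) * B ^ (-(p/2)) := by
    rw [Real.rpow_neg ht'.le, Real.rpow_neg A0.le, Real.rpow_neg B0.le]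
    field_simp
  have e1 : t ^ (-(p-q)) = t ^ (-α) * t ^ (α - (p - q)) := by
    rw [← Real.rpow_add ht']; congr 1; ring
  have e2 : B ^ (q/2) * B ^ (-(p/2)) = B ^ (-α/2) * B ^ ((α - (p - q))/2) := by
    rw [← Real.rpow_add B0, ← Real.rpow_add B0]; congr 1; ring
  have e3 : A ^ ((α - (p - q))/2) * A ^ ((α - (p - q))/2) * A ^ (-(p/2)) =
      A ^ (-α/2) * A ^ ((3 * α - (3 * p - 2 * q)) / 2) := by
    rw [← Real.rpow_add A0, ← Real.rpow_add A0, ← Real.rpow_add A0]; congr 1; ring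
  rw [e0, e1]
  calc s ^ (q/2) * (t ^ (-α) * t ^ (α - (p - q))) * A ^ (-(p/2)) * B ^ (-(p/2))
      ≤ B ^ (q/2) * (t ^ (-α) * (2 ^ (α - (p - q)) * A ^ ((α - (p - q))/2))) * A ^ (-(p/2)) *
        B ^ (-(p/2)) := by gcongr
    _ = (B ^ (q/2) * B ^ (-(p/2))) *
        (t ^ (-α) * (2 ^ (α - (p - q)) * A ^ ((α - (p - q))/2))) * A ^ (-(p/2)) := by ring
    _ = B ^ (-α/2) * B ^ ((α - (p - q))/2) *
        (t ^ (-α) * (2 ^ (α - (p - q)) * A ^ ((α - (p - q))/2))) * A ^ (-(p/2)) := by rw [e2]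
    _ ≤ B ^ (-α/2) * A ^ ((α - (p - q))/2) *
        (t ^ (-α) * (2 ^ (α - (p - q)) * A ^ ((α - (p - q))/2))) * A ^ (-(p/2)) := by gcongr
    _ = B ^ (-α/2) * t ^ (-α) * 2 ^ (α - (p - q)) *
        (A ^ ((α - (p - q))/2) * A ^ ((α - (p - q))/2) * A ^ (-(p/2))) := by ring
    _ = B ^ (-α/2) * t ^ (-α) * 2 ^ (α - (p - q)) *
        (A ^ (-α/2) * A ^ ((3 * α - (3 * p - 2 * q)) / 2)) := by rw [e3]
    _ ≤ |w| ^ (-α) * t ^ (-α) * 2 ^ (α - (p - q)) *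
        (|u| ^ (-α) * 3 ^ ((3 * α - (3 * p - 2 * q)) / 2)) := by gcongr
    _ = _ := by ring

/-- The singular kernel. -/
def nrG (α x : ℝ) : ℝ≥0∞ := (ENNReal.ofReal |x|) ^ (-α)

lemma nrG_meas (α : ℝ) : Measurable (nrG α) := by unfold nrG; fun_prop

lemma nrG_ne_zero (α x : ℝ) (h : 0 < α) : nrG α x ≠ 0 := by
  unfold nrG
  simp [ENNReal.rpow_eq_zero_iff, h, h.le]

lemma nrG_zero (α : ℝ) (h : 0 < α) : nrG α 0 = ⊤ := by
  unfold nrG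
  simp [ENNReal.zero_rpow_of_neg, h]

lemma nrG_of_ne (α x : ℝ) (h : x ≠ 0) : nrG α x = ENNReal.ofReal (|x| ^ (-α)) := by
  unfold nrG
  rw [ENNReal.ofReal_rpow_of_pos (abs_pos.2 h)]

lemma nrG_neg (α x : ℝ) : nrG α (-x) = nrG α x := by simp [nrG]

lemma nrG_fin (α : ℝ) (h1 : α < 1) : ∫⁻ x in Icc (-2:ℝ) 2, nrG α x < ⊤ := by
  have hpos : IntervalIntegrable (fun x : ℝ => |x| ^ (-α)) volume 0 2 := by
    have h := intervalIntegral.intervalIntegrable_rpow' (a := 0) (b := 2) (r := -α) (by linarith)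
    refine h.congr ?_
    intro x hx
    rw [uIoc_of_le (by norm_num)] at hx
    simp only [abs_of_pos hx.1]
  have hneg : IntervalIntegrable (fun x : ℝ => |x| ^ (-α)) volume (-2) 0 := by
    have h := (IntervalIntegrable.iff_comp_neg).1 hpos
    simpa using h.symm
  have hI := hneg.trans hpos
  rw [intervalIntegrable_iff_integrableOn_Icc_of_le (by norm_num)] at hI
  have := Integrable.lintegral_lt_top hI
  refine lt_of_le_of_lt (le_of_eq (lintegral_congr_ae ?_)) this
  have h0 : ∀ᵐ x : ℝ ∂(volume.restrict (Icc (-2:ℝ) 2)), x ≠ 0 :=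
    ae_restrict_of_ae (by simp [ae_iff])
  filter_upwards [h0] with x hx using nrG_of_ne α x hx

lemma nrG_conv (α v : ℝ) (hv : v ∈ Icc (-1:ℝ) 1) :
    ∫⁻ w in Icc (-1:ℝ) 1, nrG α (v - w) ≤ ∫⁻ x in Icc (-2:ℝ) 2, nrG α x := by
  rw [← lintegral_indicator measurableSet_Icc, ← lintegral_indicator measurableSet_Icc,
    ← lintegral_sub_left_eq_self ((Icc (-2:ℝ) 2).indicator fun x => nrG α x) v]
  apply lintegral_mono
  intro w
  by_cases hw : w ∈ Icc (-1:ℝ) 1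
  · have : v - w ∈ Icc (-2:ℝ) 2 := ⟨by linarith [hv.1, hw.2], by linarith [hv.2, hw.1]⟩
    simp [indicator_of_mem hw, indicator_of_mem this]
  · simp [indicator_of_notMem hw]

lemma nr_pointwise' (p q α : ℝ) (hp0 : 0 < p) (hq0 : 0 < q) (hα0 : 0 < α)
    (hr : p - q ≤ α) (hα : 3 * p - 2 * q ≤ 3 * α) (δ u v w : ℝ) (hδ0 : 0 < δ) (hδ : δ ≤ 1)
    (hu1 : |u| ≤ 1) (hv1 : |v| ≤ 1) (hw1 : |w| ≤ 1) :
    ENNReal.ofReal ((δ^2 + u^2) ^ (q/2) / (|v - w| ^ (p - q) * (δ^2 + u^2 + v^2) ^ (p/2) *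
              (δ^2 + u^2 + w^2) ^ (p/2))) ≤
    ENNReal.ofReal (2 ^ (α - (p - q)) * 3 ^ ((3 * α - (3 * p - 2 * q)) / 2)) *
      (nrG α u * (nrG α (v - w) * nrG α v + nrG α (v - w) * nrG α w)) := by
  have hc : ENNReal.ofReal (2 ^ (α - (p - q)) * 3 ^ ((3 * α - (3 * p - 2 * q)) / 2)) ≠ 0 := by
    rw [Ne, ENNReal.ofReal_eq_zero, not_le]; positivity
  have hn := fun x => nrG_ne_zero α x hα0
  have htop := nrG_zero α hα0
  by_cases hu : u = 0
  · subst hu; simp [htop, ENNReal.mul_top, ENNReal.top_mul, hc, hn]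
  by_cases hv : v = 0
  · subst hv; simp [htop, ENNReal.mul_top, ENNReal.top_mul, hc, hn]
  by_cases hw : w = 0
  · subst hw; simp [htop, ENNReal.mul_top, ENNReal.top_mul, hc, hn]
  by_cases ht : v - w = 0
  · simp [ht, htop, ENNReal.mul_top, ENNReal.top_mul, hc, hn]
  rw [nrG_of_ne α u hu, nrG_of_ne α v hv, nrG_of_ne α w hw, nrG_of_ne α _ ht,
    ← ENNReal.ofReal_mul (by positivity), ← ENNReal.ofReal_mul (by positivity),
    ← ENNReal.ofReal_add (by positivity) (by positivity),
    ← ENNReal.ofReal_mul (by positivity), ← ENNReal.ofReal_mul (by positivity)]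
  apply ENNReal.ofReal_le_ofReal
  rcases le_total |w| |v| with h | h
  · refine (nr_pointwise p q α hp0 hq0 hα0 hr hα δ u v w hδ0 hδ hu1 hv1 hu hw ht h).trans ?_
    rw [mul_assoc (|u| ^ (-α))]
    gcongr
    exact le_add_of_nonneg_left (by positivity)
  · have := nr_pointwise p q α hp0 hq0 hα0 hr hα δ u w v hδ0 hδ hu1 hw1 hu hv
      (by intro h; apply ht; linarith) h
    rw [abs_sub_comm w v] at this
    refine (le_of_eq ?_).trans (this.trans ?_)
    · congr 1; ring
    rw [mul_assoc (|u| ^ (-α))]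
    gcongr
    exact le_add_of_nonneg_right (by positivity)

/-- **Non-repulsiveness for `p < (2/3)q + 1`.** For `p, q > 0` with
`p < (2/3)q + 1` there is a constant `C = C(p,q) < ∞` such that for all
`δ ∈ (0,1]`
`∭_{[-1,1]³} (δ²+u²)^{q/2} / (|v-w|^{p-q} (δ²+u²+v²)^{p/2} (δ²+u²+w²)^{p/2}) ≤ C`.
This triple integral is, up to a constant, the mutual generalized integral
Menger curvature of the two perpendicular segments `u ↦ (u,0,0)` and
`u ↦ (0,u,δ)`, so `E_{p,q}` does not penalize self-intersections in this
range. -/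
theorem non_repulsive_integral_bound (p q : ℝ)
    (hp0 : 0 < p) (hq0 : 0 < q) (hpq : p < 2/3 * q + 1) :
    ∃ C : ℝ, 0 < C ∧ ∀ δ : ℝ, δ ∈ Ioc (0:ℝ) 1 →
      (∫⁻ u in Icc (-1:ℝ) 1, ∫⁻ v in Icc (-1:ℝ) 1, ∫⁻ w in Icc (-1:ℝ) 1,
          ENNReal.ofReal ((δ^2 + u^2) ^ (q/2) /
            (|v - w| ^ (p - q) * (δ^2 + u^2 + v^2) ^ (p/2) *
              (δ^2 + u^2 + w^2) ^ (p/2)))) ≤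
        ENNReal.ofReal C := by
  obtain ⟨α, hα0, hα1, hr, hα⟩ : ∃ α : ℝ, 0 < α ∧ α < 1 ∧ p - q ≤ α ∧ 3 * p - 2 * q ≤ 3 * α := by
    have h1 := le_max_left (1/2 : ℝ) (p - 2/3*q)
    have h2 := le_max_right (1/2 : ℝ) (p - 2/3*q)
    refine ⟨max (1/2) (p - 2/3 * q), by linarith, max_lt (by norm_num) (by linarith),
      by linarith, by linarith⟩
  set c := ENNReal.ofReal (2 ^ (α - (p - q)) * 3 ^ ((3 * α - (3 * p - 2 * q)) / 2)) with hc
  set K := ∫⁻ x in Icc (-2:ℝ) 2, nrG α x with hK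
  have hKt : K ≠ ⊤ := (nrG_fin α hα1).ne
  have hm := nrG_meas α
  have hK1 : ∫⁻ x in Icc (-1:ℝ) 1, nrG α x ≤ K :=
    lintegral_mono_set (Icc_subset_Icc (by norm_num) (by norm_num))
  have hfin : c * (K * (K * K + K * K)) ≠ ⊤ := by finiteness
  have hmt : Measurable (fun z : ℝ × ℝ => nrG α (z.1 - z.2)) := hm.comp (by fun_prop)
  have hX : ∫⁻ v in Icc (-1:ℝ) 1, ∫⁻ w in Icc (-1:ℝ) 1, nrG α (v - w) * nrG α v ≤ K * K := by
    calc _ ≤ ∫⁻ v in Icc (-1:ℝ) 1, K * nrG α v := by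
          apply setLIntegral_mono (by fun_prop)
          intro v hv
          rw [lintegral_mul_const _ (by fun_prop)]
          gcongr
          exact nrG_conv α v hv
      _ = K * ∫⁻ v in Icc (-1:ℝ) 1, nrG α v := lintegral_const_mul _ hm
      _ ≤ K * K := by gcongr
  have hY : ∫⁻ v in Icc (-1:ℝ) 1, ∫⁻ w in Icc (-1:ℝ) 1, nrG α (v - w) * nrG α w ≤ K * K := by
    rw [lintegral_lintegral_swap]
    · refine le_trans (le_of_eq ?_) hX
      congr 1; ext v; congr 1; ext w
      rw [← nrG_neg, neg_sub]
    · exact (hmt.mul (hm.comp measurable_snd)).aemeasurable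
  refine ⟨(c * (K * (K * K + K * K))).toReal + 1, by positivity, ?_⟩
  intro δ hδ
  have key : (∫⁻ u in Icc (-1:ℝ) 1, ∫⁻ v in Icc (-1:ℝ) 1, ∫⁻ w in Icc (-1:ℝ) 1,
          ENNReal.ofReal ((δ^2 + u^2) ^ (q/2) /
            (|v - w| ^ (p - q) * (δ^2 + u^2 + v^2) ^ (p/2) *
              (δ^2 + u^2 + w^2) ^ (p/2)))) ≤ c * (K * (K * K + K * K)) := by
    calc _ ≤ ∫⁻ u in Icc (-1:ℝ) 1, ∫⁻ v in Icc (-1:ℝ) 1, ∫⁻ w in Icc (-1:ℝ) 1,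
            c * (nrG α u * (nrG α (v - w) * nrG α v + nrG α (v - w) * nrG α w)) := by
          refine setLIntegral_mono' measurableSet_Icc fun u hu => ?_
          refine setLIntegral_mono' measurableSet_Icc fun v hv => ?_
          refine setLIntegral_mono' measurableSet_Icc fun w hw => ?_
          exact nr_pointwise' p q α hp0 hq0 hα0 hr hα δ u v w hδ.1 hδ.2
            (abs_le.2 hu) (abs_le.2 hv) (abs_le.2 hw)
      _ ≤ ∫⁻ u in Icc (-1:ℝ) 1, c * (nrG α u * (K * K + K * K)) := by
          refine lintegral_mono fun u => ?_
          have m1 : Measurable (fun z : ℝ × ℝ => nrG α (z.1 - z.2) * nrG α z.1) :=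
            hmt.mul (hm.comp measurable_fst)
          have m2 : Measurable (fun z : ℝ × ℝ => nrG α (z.1 - z.2) * nrG α z.2) :=
            hmt.mul (hm.comp measurable_snd)
          have m1v : ∀ v, Measurable (fun w => nrG α (v - w) * nrG α v) := fun v =>
            m1.comp (measurable_const.prodMk measurable_id)
          have m2v : ∀ v, Measurable (fun w => nrG α (v - w) * nrG α w) := fun v =>
            m2.comp (measurable_const.prodMk measurable_id)
          have i1 : ∀ v, ∫⁻ w in Icc (-1:ℝ) 1,
              c * (nrG α u * (nrG α (v - w) * nrG α v + nrG α (v - w) * nrG α w)) =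
              c * (nrG α u * (∫⁻ w in Icc (-1:ℝ) 1, nrG α (v - w) * nrG α v) +
                nrG α u * ∫⁻ w in Icc (-1:ℝ) 1, nrG α (v - w) * nrG α w) := by
            intro v
            rw [lintegral_const_mul _ (by fun_prop),
              lintegral_const_mul _ (by fun_prop), lintegral_add_left (m1v v), mul_add]
          have n1 : Measurable (fun v => ∫⁻ w in Icc (-1:ℝ) 1, nrG α (v - w) * nrG α v) :=
            m1.lintegral_prod_right'
          have n2 : Measurable (fun v => ∫⁻ w in Icc (-1:ℝ) 1, nrG α (v - w) * nrG α w) :=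
            m2.lintegral_prod_right'
          simp only [i1]
          rw [lintegral_const_mul _ (by fun_prop),
            lintegral_add_left (n1.const_mul _), lintegral_const_mul _ n1,
            lintegral_const_mul _ n2, mul_add (nrG α u)]
          gcongr
      _ = c * ((∫⁻ u in Icc (-1:ℝ) 1, nrG α u) * (K * K + K * K)) := by
          rw [lintegral_const_mul _ (hm.mul_const _), lintegral_mul_const _ hm]
      _ ≤ c * (K * (K * K + K * K)) := by gcongr
  refine key.trans ?_
  rw [← ENNReal.ofReal_toReal hfin]
  apply ENNReal.ofReal_le_ofReal
  rw [ENNReal.toReal_ofReal ENNReal.toReal_nonneg]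
  linarith
end
end
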